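/- Let Q be a quiver. The k-linear map δ_or : Ch_or → Ch_or ⊗ Ch_or defined by δ_or((X,H)) = Σ_{c = (i,j) ∈ H} −ω(a_i, a_j) (X_{c,1} ⊗ X_{c,2} − X_{c,2} ⊗ X_{c,1}) is a Lie cobracket, so (Ch_or, δ_or) is a Lie coalgebra. -/

import Mathlib

/-!
Statement 14: for a quiver `Q`, the chord algebra `Ch_or` (the free `k`-module with
basis the necklace chord diagrams `(X,H)`, `X` a necklace in the double quiver `Q̄` and
`H` a cut of `X`), equipped with
`δ_or((X,H)) = Σ_{c=(i,j)∈H} −ω(a_i,a_j)(X_{c,1} ⊗ X_{c,2} − X_{c,2} ⊗ X_{c,1})`,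
is a Lie coalgebra.
-/

open TensorProduct

noncomputable section

section LieCoalg

variable (k : Type*) [CommRing k] (g : Type*) [AddCommGroup g] [Module k g]

/-- `τ_{(12)}` on `g ⊗ g`. -/
def tau2 : g ⊗[k] g →ₗ[k] g ⊗[k] g := (TensorProduct.comm k g g).toLinearMap

/-- `τ_{(132)}` on the triple tensor product `g ⊗ (g ⊗ g)`: `x⊗y⊗z ↦ y⊗z⊗x`. -/
def tau132 : g ⊗[k] (g ⊗[k] g) →ₗ[k] g ⊗[k] (g ⊗[k] g) :=
  (TensorProduct.assoc k g g g).toLinearMap ∘ₗ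
    (TensorProduct.comm k g (g ⊗[k] g)).toLinearMap

/-- `τ_{(123)}` on the triple tensor product: `x⊗y⊗z ↦ z⊗x⊗y`. -/
def tau123 : g ⊗[k] (g ⊗[k] g) →ₗ[k] g ⊗[k] (g ⊗[k] g) :=
  tau132 k g ∘ₗ tau132 k g

variable {k g}

/-- `(δ ⊗ Id) ∘ δ : g → g ⊗ g ⊗ g` (triple tensor product associated as `g ⊗ (g ⊗ g)`). -/
def leftIter (δ : g →ₗ[k] g ⊗[k] g) : g →ₗ[k] g ⊗[k] (g ⊗[k] g) :=
  ((TensorProduct.assoc k g g g).toLinearMap ∘ₗ LinearMap.rTensor g δ) ∘ₗ δ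

/-- `δ : g → g ⊗ g` is a Lie cobracket if `τ_{(12)} ∘ δ = −δ` and
`(Id + τ_{(123)} + τ_{(132)}) ∘ (δ ⊗ Id) ∘ δ = 0` (co-Jacobi identity). -/
def IsLieCobracket (δ : g →ₗ[k] g ⊗[k] g) : Prop :=
  (tau2 k g) ∘ₗ δ = -δ ∧
  (LinearMap.id + tau123 k g + tau132 k g) ∘ₗ leftIter δ = 0

end LieCoalg

/-! ### Quivers, double quivers and paths

A quiver `Q` is given by a vertex type `I`, an arrow type `E`, and source/target maps
`s t : E → I`. -/

/-- The arrows of the double quiver `Q̄ = Q ⊔ Q*`: `.inl e = e` and `.inr e = e*`. -/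
abbrev Arr (E : Type*) := E ⊕ E

/-- The involution `a ↦ a*` on arrows of the double quiver (with `(e*)* = e`). -/
def astar {E : Type*} : Arr E → Arr E
  | .inl e => .inr e
  | .inr e => .inl e

/-- The source `a_s` of an arrow of the double quiver. -/
def asrc {I E : Type*} (s t : E → I) : Arr E → I
  | .inl e => s e
  | .inr e => t e

/-- The target `a_t` of an arrow of the double quiver. -/
def atgt {I E : Type*} (s t : E → I) : Arr E → I
  | .inl e => t e
  | .inr e => s e

open scoped Classical in
/-- The pairing `ω`: `ω(e,e*) = 1`, `ω(e*,e) = −1` for `e ∈ Q`, and `ω(a,b) = 0`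
whenever `b ≠ a*`. -/
def omg (k : Type*) [CommRing k] {E : Type*} : Arr E → Arr E → k
  | .inl e, .inr e' => if e = e' then 1 else 0
  | .inr e, .inl e' => if e = e' then -1 else 0
  | _, _ => 0

/-- `IsPathFrom s t v l`: `l` is a composable sequence of arrows starting at `v`. -/
def IsPathFrom {I E : Type*} (s t : E → I) : I → List (Arr E) → Prop
  | _, [] => True
  | v, a :: l => asrc s t a = v ∧ IsPathFrom s t (atgt s t a) l

/-- The target of a path. -/
def pathTgt {I E : Type*} (s t : E → I) : I → List (Arr E) → I
  | v, [] => v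
  | _, a :: l => pathTgt s t (atgt s t a) l

/-- A path in the double quiver `Q̄`. -/
structure QPath {I E : Type*} (s t : E → I) : Type _ where
  src : I
  arrows : List (Arr E)
  valid : IsPathFrom s t src arrows

/-! ### Cuts of paths -/

/-- A cut of a path with arrow list `l` (0-indexed): a set `H` of pairs `(i,j)` of
positions such that all the involved positions are distinct, `i < j` for each pair, the
pairs do not cross, and for each pair `{a_i, a_j} = {e, e*}` for some arrow `e ∈ Q`. -/
def IsCut {E : Type*} (l : List (Arr E)) (H : Finset (ℕ × ℕ)) : Prop :=
  (∀ c ∈ H, c.1 < c.2 ∧ c.2 < l.length ∧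
    ∃ e : E, (l[c.1]? = some (.inl e) ∧ l[c.2]? = some (.inr e)) ∨
             (l[c.1]? = some (.inr e) ∧ l[c.2]? = some (.inl e))) ∧
  (∀ c ∈ H, ∀ c' ∈ H, c ≠ c' →
    c.1 ≠ c'.1 ∧ c.1 ≠ c'.2 ∧ c.2 ≠ c'.1 ∧ c.2 ≠ c'.2) ∧
  ¬ ∃ c ∈ H, ∃ c' ∈ H, c.1 < c'.1 ∧ c'.1 < c.2 ∧ c.2 < c'.2

/-- No pair of a cut is nested inside another: together with `IsCut` this defines
simple cuts of paths. -/
def NoNest (H : Finset (ℕ × ℕ)) : Prop :=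
  ¬ ∃ c ∈ H, ∃ c' ∈ H, c.1 < c'.1 ∧ c'.2 < c.2

/-- A simple cut of a path: a cut in which no pair is nested inside another. -/
def IsSimpleCut {E : Type*} (l : List (Arr E)) (H : Finset (ℕ × ℕ)) : Prop :=
  IsCut l H ∧ NoNest H

/-- The sign `ε` contributed by one pair of a cut: `−ω(a_i, a_j)`. -/
def epsFactor (k : Type*) [CommRing k] {E : Type*} (l : List (Arr E)) (c : ℕ × ℕ) : k :=
  match l[c.1]?, l[c.2]? with
  | some a, some b => -(omg k a b)
  | _, _ => 0

/-- The sign `ε_H = ∏_ℓ (−ω(a_{i_ℓ}, a_{j_ℓ}))` of a cut. -/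
def epsH (k : Type*) [CommRing k] {E : Type*} (l : List (Arr E)) (H : Finset (ℕ × ℕ)) :
    k := ∏ c ∈ H, epsFactor k l c

/-- The chords of `H` lying strictly inside the chord `(i,j)`, reindexed along the path
`a_{i+1} ⋯ a_{j−1}`. -/
def insideCut (H : Finset (ℕ × ℕ)) (i j : ℕ) : Finset (ℕ × ℕ) :=
  (H.filter (fun c' => i < c'.1 ∧ c'.2 < j)).image
    (fun c' => (c'.1 - (i+1), c'.2 - (i+1)))

/-- The chords of `H` other than `(i,j)` not lying inside the chord `(i,j)`, reindexed
along the path `a₁ ⋯ a_{i−1} a_{j+1} ⋯ a_n`. -/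
def outsideCut (H : Finset (ℕ × ℕ)) (i j : ℕ) : Finset (ℕ × ℕ) :=
  ((H.erase (i, j)).filter (fun c' => ¬ (i < c'.1 ∧ c'.2 < j))).image
    (fun c' => (if j < c'.1 then c'.1 - (j - i + 1) else c'.1,
                if j < c'.2 then c'.2 - (j - i + 1) else c'.2))

/-- A closed path in the double quiver. -/
structure ClosedQPath {I E : Type*} (s t : E → I) : Type _ where
  path : QPath s t
  closed : pathTgt s t path.src path.arrows = path.src

/-- A closed path together with a cut (in a chosen linearization). -/
def NCDRaw {I E : Type*} (s t : E → I) : Type _ :=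
  {x : ClosedQPath s t × Finset (ℕ × ℕ) // IsCut x.1.path.arrows x.2}

/-- Simultaneous rotation of a closed path and of its cut: the equivalence closure of
this relation identifies exactly the data giving the same necklace chord diagram. -/
def RotRelC {I E : Type*} (s t : E → I) (p q : NCDRaw s t) : Prop :=
  ∃ (a : Arr E) (l : List (Arr E)),
    p.1.1.path.arrows = a :: l ∧ q.1.1.path.arrows = l ++ [a] ∧
    q.1.1.path.src = atgt s t a ∧
    q.1.2 = p.1.2.image (fun c => if c.1 = 0 then (c.2 - 1, l.length) else (c.1 - 1, c.2 - 1))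

/-- Necklace chord diagrams: a necklace (cyclic path) in `Q̄` together with a cut. -/
def NCD {I E : Type*} (s t : E → I) : Type _ := Quot (RotRelC s t)

variable (k : Type*) [CommRing k] {I E : Type*} (s t : E → I)

/-- The chord algebra `Ch_or`: the free `k`-module with basis the necklace chord
diagrams. -/
abbrev ChOr := NCD s t →₀ k

open scoped Classical in
/-- The basis vector of a necklace chord diagram, or `0` if the data is not a necklace
chord diagram. -/
def mkNCD (v : I) (l : List (Arr E)) (H : Finset (ℕ × ℕ)) : ChOr k s t :=
  if h : (IsPathFrom s t v l ∧ pathTgt s t v l = v) ∧ IsCut l H then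
    Finsupp.single (Quot.mk (RotRelC s t) ⟨(⟨⟨v, l, h.1.1⟩, h.1.2⟩, H), h.2⟩) (1 : k)
  else 0

/-- The chords of `H` outside the chord `(i,j)` of a cut of a necklace of length `n`,
reindexed along the cyclic path `(a_j)_t a_{j+1}⋯a_n a_1 ⋯ a_{i−1}`. -/
def outsideCutC (H : Finset (ℕ × ℕ)) (n i j : ℕ) : Finset (ℕ × ℕ) :=
  ((H.erase (i, j)).filter (fun c' => ¬ (i < c'.1 ∧ c'.2 < j))).image
    (fun c' =>
      let f : ℕ → ℕ := fun x => if j < x then x - (j + 1) else x + (n - 1 - j)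
      (min (f c'.1) (f c'.2), max (f c'.1) (f c'.2)))

/-- The summand of `δ_or` on `Ch_or` corresponding to the chord `c = (i,j)`:
`−ω(a_i,a_j) (X_{c,1} ⊗ X_{c,2} − X_{c,2} ⊗ X_{c,1})`, where `X_{c,1}` is the necklace
chord diagram on `[(a_i)_t a_{i+1}⋯a_{j−1}]` with the chords inside `c` and `X_{c,2}`
the one on `[(a_j)_t a_{j+1}⋯a_{i−1}]` with the chords outside `c`. -/
def chOrTerm (x : NCDRaw s t) (c : ℕ × ℕ) : ChOr k s t ⊗[k] ChOr k s t :=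
  let v := x.1.1.path.src
  let l := x.1.1.path.arrows
  let H := x.1.2
  match l[c.1]?, l[c.2]? with
  | some a, some b =>
      let X1 := mkNCD k s t (atgt s t a) ((l.drop (c.1+1)).take (c.2 - c.1 - 1))
        (insideCut H c.1 c.2)
      let X2 := mkNCD k s t (atgt s t b) (l.drop (c.2+1) ++ l.take c.1)
        (outsideCutC H l.length c.1 c.2)
      (-(omg k a b)) • (X1 ⊗ₜ[k] X2 - X2 ⊗ₜ[k] X1)
  | _, _ => (0 : k) • (mkNCD k s t v [] ∅ ⊗ₜ[k] mkNCD k s t v [] ∅)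

/-- The Lie cobracket `δ_or` on the chord algebra `Ch_or` (computed on a representative;
the result does not depend on the choice). -/
def deltaChOr : ChOr k s t →ₗ[k] ChOr k s t ⊗[k] ChOr k s t :=
  Finsupp.lift (ChOr k s t ⊗[k] ChOr k s t) k (NCD s t) fun q =>
    ∑ c ∈ q.out.1.2, chOrTerm k s t q.out c

/-!
Label the arrow occurrences of a necklace chord diagram. Its chords become the edges of a graph on
the labels, so the diagram is a cyclic list of labels, and rotating it or passing to a piece cut
off by a chord does not touch the graph. Each chord has two directions, and `c` cuts off the arc
from its tail to its head while the reversed chord cuts off the complementary arc. Since `ω` is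
antisymmetric, `δ` of a diagram is the sum over directed chords `c` of
`-ω(c) (arc of c) ⊗ (arc of reversed c)`, which is visibly rotation invariant and antisymmetric.

A term of `(δ ⊗ Id) ∘ δ` is a directed chord `p` followed by a directed chord `q` inside the arc of
`p`. If `q` points in the same direction as `p`, then `p` lies inside the arc of the reversed `q`,
and the terms of `(p, q)` and of `(reversed q, p)` consist of the same three pieces up to a cyclic
permutation, with opposite signs. This pairs off all terms, and each pair vanishes after
cyclic symmetrization.
-/

section CyclicArc

open scoped List

variable {ι : Type*} {L L' T A B : List ι} {i j : ι}

theorem isRotated_cons_append_cons (i j : ι) (A B : List ι) :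
    (i :: (A ++ j :: B)) ~r (j :: (B ++ i :: A)) := by
  simpa using (List.isRotated_append : (i :: A ++ j :: B) ~r (j :: B ++ i :: A))

theorem isRotated_append_cons_append_cons (u A B : List ι) (i j : ι) :
    (u ++ i :: (A ++ j :: B)) ~r (i :: (A ++ j :: (B ++ u))) := by
  simpa using (List.isRotated_append : (u ++ (i :: (A ++ j :: B))) ~r _)

theorem isRotated_nested_swap (M B M' A : List ι) (i j m n : ι) :
    (i :: ((M ++ m :: (B ++ n :: M')) ++ j :: A)) ~r
      (n :: ((M' ++ j :: (A ++ i :: M)) ++ m :: B)) := by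
  simpa using (List.isRotated_append : ((i :: (M ++ m :: B)) ++ (n :: (M' ++ j :: A))) ~r _)

theorem exists_isRotated_cons_append_cons (hij : i ≠ j) (hi : i ∈ L) (hj : j ∈ L) :
    ∃ A B, L ~r (i :: (A ++ j :: B)) := by
  obtain ⟨u, v, rfl⟩ := List.append_of_mem hi
  have hjv : j ∈ v ++ u := by simpa [hij.symm, or_comm] using hj
  obtain ⟨A, B, hAB⟩ := List.append_of_mem hjv
  exact ⟨A, B, by simpa [← hAB] using (List.isRotated_append : (u ++ i :: v) ~r (i :: v ++ u))⟩

variable [DecidableEq ι]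

theorem exists_eq_append_cons_append_cons (h : L.idxOf i < L.idxOf j) (hj : j ∈ L) :
    ∃ u A B, L = u ++ i :: (A ++ j :: B) := by
  have hi : i ∈ L := List.idxOf_lt_length_iff.1 (h.trans (List.idxOf_lt_length_iff.2 hj))
  obtain ⟨u, v, rfl, hiu⟩ := List.eq_append_cons_of_mem hi
  have hju : j ∉ u := fun hju ↦ by
    have := List.idxOf_lt_length_iff.2 hju
    rw [List.idxOf_append_of_notMem hiu, List.idxOf_append_of_mem hju] at h
    omega
  have hij : j ≠ i := fun e ↦ h.ne (by rw [e])
  obtain ⟨A, B, rfl⟩ := List.append_of_mem (show j ∈ v by simpa [hju, hij] using hj)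
  exact ⟨u, A, B, rfl⟩

theorem rotate_idxOf_of_isRotated_cons (hL : L.Nodup) (h : L ~r (i :: T)) :
    L.rotate (L.idxOf i) = i :: T := by
  obtain ⟨n, hn, hr⟩ := List.isRotated_iff_mod.1 h
  obtain hn | rfl := hn.lt_or_eq
  · have hi : L[n] = i := by
      simpa [hr, List.getElem?_eq_getElem hn] using (List.head?_rotate hn).symm
    rw [← hi, hL.idxOf_getElem, hr, hi]
  · rw [List.rotate_length] at hr
    simp [hr]

/-- The arc strictly between `i` and `j` in the cyclic order of `L`, for distinct entries `i` and
`j` of `L`. -/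
def cyclicArc (L : List ι) (i j : ι) : List ι :=
  (L.rotate (L.idxOf i)).tail.takeWhile (· ≠ j)

theorem cyclicArc_eq (hL : L.Nodup) (h : L ~r (i :: (A ++ j :: B))) : cyclicArc L i j = A := by
  have hj : j ∉ A := fun hjA ↦ by
    have := h.nodup_iff.1 hL
    grind
  have hA : ∀ a ∈ A, decide (a ≠ j) = true := fun a ha ↦
    decide_eq_true (ne_of_mem_of_not_mem ha hj)
  rw [cyclicArc, rotate_idxOf_of_isRotated_cons hL h, List.tail_cons,
    List.takeWhile_append_of_pos hA]
  simp

theorem cyclicArc_swap_eq (hL : L.Nodup) (h : L ~r (i :: (A ++ j :: B))) :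
    cyclicArc L j i = B :=
  cyclicArc_eq hL (h.trans (isRotated_cons_append_cons i j A B))

theorem isRotated_cyclicArc (hL : L.Nodup) (hij : i ≠ j) (hi : i ∈ L) (hj : j ∈ L) :
    L ~r (i :: (cyclicArc L i j ++ j :: cyclicArc L j i)) := by
  obtain ⟨A, B, h⟩ := exists_isRotated_cons_append_cons hij hi hj
  rwa [cyclicArc_eq hL h, cyclicArc_swap_eq hL h]

theorem cyclicArc_congr (hL : L.Nodup) (h : L ~r L') (hij : i ≠ j) (hi : i ∈ L) (hj : j ∈ L) :
    cyclicArc L i j = cyclicArc L' i j :=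
  (cyclicArc_eq (h.nodup_iff.1 hL) (h.symm.trans (isRotated_cyclicArc hL hij hi hj))).symm

end CyclicArc

section ChordDiagrams

open scoped List

variable {ι : Type*} {G : SimpleGraph ι} {L L' A B : List ι} {i j : ι}

/-- A chord diagram drawn on the cyclic list `L`: the edges of `G` pair entries of `L` without
crossing. -/
structure IsChordDiagram (G : SimpleGraph ι) (L : List ι) : Prop where
  nodup : L.Nodup
  unique : ∀ i j j', G.Adj i j → G.Adj i j' → j = j'
  noncrossing : ∀ a b c d, [a, b, c, d] <+ L → G.Adj a c → ¬ G.Adj b d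

namespace IsChordDiagram

theorem sublist (h : IsChordDiagram G L) (hL : L' <+ L) : IsChordDiagram G L' :=
  ⟨hL.nodup h.nodup, h.unique, fun a b c d hs ↦ h.noncrossing a b c d (hs.trans hL)⟩

theorem append_comm (h : IsChordDiagram G (A ++ B)) : IsChordDiagram G (B ++ A) := by
  refine ⟨List.isRotated_append.nodup_iff.1 h.nodup, h.unique, fun a b c d hs hac hbd ↦ ?_⟩
  obtain ⟨l₁, l₂, e, h₁, h₂⟩ := List.sublist_append_iff.1 hs
  have hsub := h₂.append h₁
  simp only [List.cons_eq_append_iff, List.nil_eq_append_iff] at e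
  rcases e with ⟨rfl, rfl⟩ | ⟨_, rfl, ⟨rfl, rfl⟩ | ⟨_, rfl, ⟨rfl, rfl⟩ | ⟨_, rfl, ⟨rfl, rfl⟩ |
    ⟨_, rfl, rfl, rfl⟩⟩⟩⟩
  · exact h.noncrossing a b c d hsub hac hbd
  · exact h.noncrossing b c d a hsub hbd hac.symm
  · exact h.noncrossing c d a b hsub hac.symm hbd.symm
  · exact h.noncrossing d a b c hsub hbd.symm hac
  · exact h.noncrossing a b c d hsub hac hbd

theorem of_isRotated (h : IsChordDiagram G L) (hL : L ~r L') : IsChordDiagram G L' := by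
  obtain ⟨n, hn, rfl⟩ := List.isRotated_iff_mod.1 hL
  rw [List.rotate_eq_drop_append_take hn]
  exact (by rwa [List.take_append_drop] : IsChordDiagram G (L.take n ++ L.drop n)).append_comm

theorem not_adj_across (h : IsChordDiagram G L) (hL : L ~r (i :: (A ++ j :: B)))
    (hij : G.Adj i j) {x y : ι} (hx : x ∈ A) (hy : y ∈ B) : ¬ G.Adj x y :=
  (h.of_isRotated hL).noncrossing i x j y
    (((List.singleton_sublist.2 hx).append ((List.singleton_sublist.2 hy).cons_cons j)).cons_cons i)
    hij

end IsChordDiagram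

end ChordDiagrams

section ChordPositions

open scoped List

variable {ι : Type*} [DecidableEq ι] {G : SimpleGraph ι} {L L' u A B : List ι} {i j : ι}

open scoped Classical in
/-- The directed chords of the graph `G` between entries of `L`: an edge `{i, j}` gives rise to
both `(i, j)` and `(j, i)`. -/
def chords (G : SimpleGraph ι) (L : List ι) : Finset (ι × ι) :=
  {c ∈ L.toFinset ×ˢ L.toFinset | G.Adj c.1 c.2}

/-- The directed chords whose tail comes before their head in `L`. -/
def forwardChords (G : SimpleGraph ι) (L : List ι) : Finset (ι × ι) :=
  {c ∈ chords G L | L.idxOf c.1 < L.idxOf c.2}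

/-- The pairs of positions in `L` joined by an edge of `G`, ordered increasingly as in a cut. -/
def chordPairs (G : SimpleGraph ι) (L : List ι) : Finset (ℕ × ℕ) :=
  (forwardChords G L).image fun c ↦ (L.idxOf c.1, L.idxOf c.2)

theorem mem_chords {c : ι × ι} : c ∈ chords G L ↔ (c.1 ∈ L ∧ c.2 ∈ L) ∧ G.Adj c.1 c.2 := by
  simp [chords]

theorem mem_forwardChords {c : ι × ι} :
    c ∈ forwardChords G L ↔ c ∈ chords G L ∧ L.idxOf c.1 < L.idxOf c.2 := by
  simp [forwardChords]

theorem swap_mem_chords {c : ι × ι} : c.swap ∈ chords G L ↔ c ∈ chords G L := by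
  simp [mem_chords, G.adj_comm, and_comm]

theorem idxOf_lt_or_gt_of_mem_chords {c : ι × ι} (hc : c ∈ chords G L) :
    L.idxOf c.1 < L.idxOf c.2 ∨ L.idxOf c.2 < L.idxOf c.1 := by
  obtain ⟨⟨h₁, -⟩, hadj⟩ := mem_chords.1 hc
  exact lt_or_gt_of_ne fun e ↦ hadj.ne ((List.idxOf_inj h₁).1 e)

theorem chords_congr (h : L ~r L') : chords G L = chords G L' := by
  ext c
  simp [mem_chords, h.mem_iff]

theorem lt_of_mem_chordPairs {p : ℕ × ℕ} (hp : p ∈ chordPairs G L) : p.1 < p.2 := by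
  obtain ⟨c, hc, rfl⟩ := Finset.mem_image.1 hp
  exact (mem_forwardChords.1 hc).2

theorem sum_chords {M : Type*} [AddCommMonoid M] (f : ι × ι → M) :
    ∑ c ∈ chords G L, f c = ∑ c ∈ forwardChords G L, (f c + f c.swap) := by
  rw [Finset.sum_add_distrib,
    ← Finset.sum_filter_add_sum_filter_not _ fun c : ι × ι ↦ L.idxOf c.1 < L.idxOf c.2]
  congr 1
  refine Finset.sum_nbij' Prod.swap Prod.swap (fun c hc ↦ ?_) (fun c hc ↦ ?_)
    (fun _ _ ↦ Prod.swap_swap _) (fun _ _ ↦ Prod.swap_swap _) (fun _ _ ↦ by rw [Prod.swap_swap])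
  · obtain ⟨hc, hlt⟩ := Finset.mem_filter.1 hc
    exact mem_forwardChords.2
      ⟨swap_mem_chords.2 hc, (idxOf_lt_or_gt_of_mem_chords hc).resolve_left hlt⟩
  · obtain ⟨hc, hlt⟩ := mem_forwardChords.1 hc
    exact Finset.mem_filter.2 ⟨swap_mem_chords.2 hc, hlt.not_gt⟩

theorem sum_chordPairs {M : Type*} [AddCommMonoid M] (f : ℕ × ℕ → M) :
    ∑ c ∈ chordPairs G L, f c = ∑ c ∈ forwardChords G L, f (L.idxOf c.1, L.idxOf c.2) := by
  refine Finset.sum_image fun c hc d _ h ↦ ?_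
  obtain ⟨⟨h₁, h₂⟩, -⟩ := mem_chords.1 (mem_forwardChords.1 hc).1
  obtain ⟨e₁, e₂⟩ := Prod.mk.inj h
  exact Prod.ext ((List.idxOf_inj h₁).1 e₁) ((List.idxOf_inj h₂).1 e₂)

theorem chordPairs_eq_image_chords :
    chordPairs G L = (chords G L).image fun c ↦
      (min (L.idxOf c.1) (L.idxOf c.2), max (L.idxOf c.1) (L.idxOf c.2)) := by
  ext p
  simp only [chordPairs, Finset.mem_image]
  constructor
  · rintro ⟨c, hc, rfl⟩
    obtain ⟨hc, hlt⟩ := mem_forwardChords.1 hc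
    exact ⟨c, hc, by rw [min_eq_left hlt.le, max_eq_right hlt.le]⟩
  · rintro ⟨c, hc, rfl⟩
    rcases idxOf_lt_or_gt_of_mem_chords hc with hlt | hlt
    · exact ⟨c, mem_forwardChords.2 ⟨hc, hlt⟩, by rw [min_eq_left hlt.le, max_eq_right hlt.le]⟩
    · exact ⟨c.swap, mem_forwardChords.2 ⟨swap_mem_chords.2 hc, hlt⟩,
        by rw [min_eq_right hlt.le, max_eq_left hlt.le]; rfl⟩

theorem image_filter_chordPairs {P : ℕ → Prop} [DecidablePred P] {f : ℕ → ℕ} (hsub : L' ⊆ L)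
    (hP : ∀ x ∈ L, P (L.idxOf x) ↔ x ∈ L') (hf : ∀ x ∈ L', f (L.idxOf x) = L'.idxOf x) :
    ((chordPairs G L).filter fun p ↦ P p.1 ∧ P p.2).image
      (fun p ↦ (min (f p.1) (f p.2), max (f p.1) (f p.2))) = chordPairs G L' := by
  have hchords : {c ∈ chords G L | P (min (L.idxOf c.1) (L.idxOf c.2)) ∧
      P (max (L.idxOf c.1) (L.idxOf c.2))} = chords G L' := by
    ext c
    rw [Finset.mem_filter, mem_chords, mem_chords]
    rcases le_total (L.idxOf c.1) (L.idxOf c.2) with h | h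
    · grind
    · grind
  rw [chordPairs_eq_image_chords, chordPairs_eq_image_chords, Finset.filter_image, hchords,
    Finset.image_image]
  refine Finset.image_congr fun c hc ↦ ?_
  obtain ⟨⟨h₁, h₂⟩, -⟩ := mem_chords.1 hc
  rw [← hf _ h₁, ← hf _ h₂]
  rcases le_total (L.idxOf c.1) (L.idxOf c.2) with h | h
  · simp [h]
  · simp [h, min_comm, max_comm]

theorem IsChordDiagram.mem_chords_cases (h : IsChordDiagram G L) (hL : L ~r (i :: (A ++ j :: B)))
    (hij : G.Adj i j) {c : ι × ι} (hc : c ∈ chords G L) :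
    c = (i, j) ∨ c = (j, i) ∨ (c.1 ∈ A ∧ c.2 ∈ A) ∨ (c.1 ∈ B ∧ c.2 ∈ B) := by
  obtain ⟨x, y⟩ := c
  obtain ⟨⟨hx, hy⟩, hxy⟩ := mem_chords.1 hc
  have hAB : ∀ x ∈ A, ∀ y ∈ B, ¬ G.Adj x y := fun _ hx _ hy ↦ h.not_adj_across hL hij hx hy
  have hsymm : ∀ x y, G.Adj x y → G.Adj y x := fun _ _ ↦ SimpleGraph.Adj.symm
  have hunique := h.unique
  simp only [hL.mem_iff, List.mem_cons, List.mem_append] at hx hy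
  grind

theorem IsChordDiagram.disjoint_of_mem_forwardChords (h : IsChordDiagram G L) {c d : ι × ι}
    (hc : c ∈ forwardChords G L) (hd : d ∈ forwardChords G L) (hcd : c ≠ d) :
    c.1 ≠ d.1 ∧ c.1 ≠ d.2 ∧ c.2 ≠ d.1 ∧ c.2 ≠ d.2 := by
  obtain ⟨hc, hc_lt⟩ := mem_forwardChords.1 hc
  obtain ⟨hd, hd_lt⟩ := mem_forwardChords.1 hd
  have hc := (mem_chords.1 hc).2
  have hd := (mem_chords.1 hd).2
  refine ⟨fun e ↦ ?_, fun e ↦ ?_, fun e ↦ ?_, fun e ↦ ?_⟩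
  · exact hcd (Prod.ext e (h.unique _ _ _ hc (e ▸ hd)))
  · have e' := h.unique _ _ _ hc (e ▸ hd.symm)
    exact hc_lt.not_gt (e ▸ e' ▸ hd_lt)
  · have e' := h.unique _ _ _ hc.symm (e ▸ hd)
    exact hc_lt.not_gt (e ▸ e' ▸ hd_lt)
  · exact hcd (Prod.ext (h.unique _ _ _ hc.symm (e ▸ hd.symm)) e)

theorem sublist_of_idxOf_lt {a b c d : ι} (hab : L.idxOf a < L.idxOf b)
    (hbc : L.idxOf b < L.idxOf c) (hcd : L.idxOf c < L.idxOf d) (hd : d ∈ L) :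
    [a, b, c, d] <+ L := by
  have hd := List.idxOf_lt_length_iff.2 hd
  have hsub := List.map_getElem_sublist (l := L) (is := [⟨L.idxOf a, by omega⟩,
    ⟨L.idxOf b, by omega⟩, ⟨L.idxOf c, by omega⟩, ⟨L.idxOf d, hd⟩]) (by simp; omega)
  simpa using hsub

theorem idxOf_append_cons_append_cons (hL : (u ++ i :: (A ++ j :: B)).Nodup) :
    (u ++ i :: (A ++ j :: B)).idxOf i = u.length ∧
      (u ++ i :: (A ++ j :: B)).idxOf j = u.length + 1 + A.length ∧
      (∀ x ∈ u, (u ++ i :: (A ++ j :: B)).idxOf x = u.idxOf x) ∧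
      (∀ x ∈ A, (u ++ i :: (A ++ j :: B)).idxOf x = u.length + 1 + A.idxOf x) ∧
      ∀ x ∈ B, (u ++ i :: (A ++ j :: B)).idxOf x = u.length + 1 + A.length + 1 + B.idxOf x := by
  refine ⟨?_, ?_, ?_, ?_, ?_⟩ <;> grind

theorem mem_inside_iff (hL : (u ++ i :: (A ++ j :: B)).Nodup) {x : ι}
    (hx : x ∈ u ++ i :: (A ++ j :: B)) :
    u.length < (u ++ i :: (A ++ j :: B)).idxOf x ∧
      (u ++ i :: (A ++ j :: B)).idxOf x < u.length + 1 + A.length ↔ x ∈ A := by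
  obtain ⟨hi, hj, hu, hA, hB⟩ := idxOf_append_cons_append_cons hL
  have hlt {l : List ι} : x ∈ l → l.idxOf x < l.length := List.idxOf_lt_length_iff.2
  simp only [List.mem_append, List.mem_cons] at hx
  rcases hx with hx | rfl | hx | rfl | hx
  · have := hlt hx
    grind
  · grind
  · have := hlt hx
    grind
  · grind
  · grind

theorem mem_outside_iff (hL : (u ++ i :: (A ++ j :: B)).Nodup) {x : ι}
    (hx : x ∈ u ++ i :: (A ++ j :: B)) :
    (u ++ i :: (A ++ j :: B)).idxOf x < u.length ∨
      u.length + 1 + A.length < (u ++ i :: (A ++ j :: B)).idxOf x ↔ x ∈ B ++ u := by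
  obtain ⟨hi, hj, hu, hA, hB⟩ := idxOf_append_cons_append_cons hL
  have hlt {l : List ι} : x ∈ l → l.idxOf x < l.length := List.idxOf_lt_length_iff.2
  simp only [List.mem_append, List.mem_cons] at hx
  rcases hx with hx | rfl | hx | rfl | hx
  · have := hlt hx
    grind
  · grind
  · have := hlt hx
    grind
  · grind
  · grind

theorem insideCut_chordPairs (hL : (u ++ i :: (A ++ j :: B)).Nodup) :
    insideCut (chordPairs G (u ++ i :: (A ++ j :: B))) u.length (u.length + 1 + A.length) =
      chordPairs G A := by
  obtain ⟨-, -, -, hA, -⟩ := idxOf_append_cons_append_cons hL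
  rw [insideCut, ← image_filter_chordPairs (L' := A) (L := u ++ i :: (A ++ j :: B))
    (P := fun p ↦ u.length < p ∧ p < u.length + 1 + A.length) (f := fun p ↦ p - (u.length + 1))
    (fun x hx ↦ by simp [hx]) (fun x hx ↦ mem_inside_iff hL hx) (fun x hx ↦ by rw [hA x hx]; omega)]
  have hfilter : {p ∈ chordPairs G (u ++ i :: (A ++ j :: B)) |
        u.length < p.1 ∧ p.2 < u.length + 1 + A.length} =
      {p ∈ chordPairs G (u ++ i :: (A ++ j :: B)) |
        (u.length < p.1 ∧ p.1 < u.length + 1 + A.length) ∧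
          u.length < p.2 ∧ p.2 < u.length + 1 + A.length} :=
    Finset.filter_congr fun p hp ↦ by have := lt_of_mem_chordPairs hp; omega
  rw [← hfilter]
  refine Finset.image_congr fun p hp ↦ ?_
  have hlt := lt_of_mem_chordPairs (Finset.mem_filter.1 hp).1
  rw [min_eq_left (by omega), max_eq_right (by omega)]

theorem filter_erase_chordPairs (h : IsChordDiagram G (u ++ i :: (A ++ j :: B)))
    (hij : G.Adj i j) :
    {p ∈ (chordPairs G (u ++ i :: (A ++ j :: B))).erase (u.length, u.length + 1 + A.length) |
        ¬ (u.length < p.1 ∧ p.2 < u.length + 1 + A.length)} =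
      {p ∈ chordPairs G (u ++ i :: (A ++ j :: B)) |
        (p.1 < u.length ∨ u.length + 1 + A.length < p.1) ∧
          (p.2 < u.length ∨ u.length + 1 + A.length < p.2)} := by
  obtain ⟨hi, hj, -, -, -⟩ := idxOf_append_cons_append_cons h.nodup
  rw [← Finset.filter_ne', Finset.filter_filter]
  refine Finset.filter_congr fun p hp ↦ ?_
  obtain ⟨c, hc, rfl⟩ := Finset.mem_image.1 hp
  obtain ⟨hc, hlt⟩ := mem_forwardChords.1 hc
  obtain ⟨h₁, h₂⟩ := (mem_chords.1 hc).1
  have hrot := isRotated_append_cons_append_cons u A B i j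
  rw [ne_eq, Prod.mk.injEq]
  rcases h.mem_chords_cases hrot hij hc with rfl | rfl | ⟨m₁, m₂⟩ | ⟨m₁, m₂⟩
  · dsimp only at hlt ⊢
    omega
  · dsimp only at hlt
    omega
  · have := (mem_inside_iff h.nodup h₁).2 m₁
    have := (mem_inside_iff h.nodup h₂).2 m₂
    omega
  · have := (mem_outside_iff h.nodup h₁).2 m₁
    have := (mem_outside_iff h.nodup h₂).2 m₂
    omega

theorem outsideCutC_chordPairs (h : IsChordDiagram G (u ++ i :: (A ++ j :: B)))
    (hij : G.Adj i j) :
    outsideCutC (chordPairs G (u ++ i :: (A ++ j :: B))) (u ++ i :: (A ++ j :: B)).length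
      u.length (u.length + 1 + A.length) = chordPairs G (B ++ u) := by
  obtain ⟨-, -, hu, -, hB⟩ := idxOf_append_cons_append_cons h.nodup
  rw [outsideCutC, filter_erase_chordPairs h hij]
  refine image_filter_chordPairs (P := fun p ↦ p < u.length ∨ u.length + 1 + A.length < p)
    (f := fun p ↦ if u.length + 1 + A.length < p then p - (u.length + 1 + A.length + 1) else
      p + ((u ++ i :: (A ++ j :: B)).length - 1 - (u.length + 1 + A.length)))
    (fun x hx ↦ by grind) (fun x hx ↦ mem_outside_iff h.nodup hx) fun x hx ↦ ?_
  by_cases hxB : x ∈ B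
  · rw [hB x hxB, List.idxOf_append_of_mem hxB, if_pos (by omega)]
    omega
  · have hxu : x ∈ u := by simpa [hxB] using hx
    have hlt := List.idxOf_lt_length_iff.2 hxu
    rw [hu x hxu, List.idxOf_append_of_notMem hxB, if_neg (by omega)]
    simp only [List.length_append, List.length_cons]
    omega

theorem chordPairs_append_singleton {a : ι} {l : List ι} (hL : (a :: l).Nodup) :
    chordPairs G (l ++ [a]) = (chordPairs G (a :: l)).image
      fun c ↦ if c.1 = 0 then (c.2 - 1, l.length) else (c.1 - 1, c.2 - 1) := by
  have ha : a ∉ l := (List.nodup_cons.1 hL).1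
  have hf : ∀ x ∈ l ++ [a], (if (a :: l).idxOf x = 0 then l.length else (a :: l).idxOf x - 1) =
      (l ++ [a]).idxOf x := fun x hx ↦ by
    rcases List.mem_append.1 hx with hx | hx
    · have hax : a ≠ x := (ne_of_mem_of_not_mem hx ha).symm
      simp [List.idxOf_cons_ne _ hax, List.idxOf_append_of_mem hx]
    · simp [List.mem_singleton.1 hx, List.idxOf_append_of_notMem ha]
  rw [← image_filter_chordPairs (P := fun _ ↦ True) (f := fun p ↦ if p = 0 then l.length else p - 1)
    (L := a :: l) (by simp) (by simp [or_comm]) hf]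
  simp only [and_self, Finset.filter_true]
  refine Finset.image_congr fun p hp ↦ ?_
  obtain ⟨c, hc, rfl⟩ := Finset.mem_image.1 hp
  obtain ⟨hc, hlt⟩ := mem_forwardChords.1 hc
  have hlen := List.idxOf_lt_length_iff.2 (mem_chords.1 hc).1.2
  rw [List.length_cons] at hlen
  have h₂ : (a :: l).idxOf c.2 ≠ 0 := by omega
  by_cases h₁ : (a :: l).idxOf c.1 = 0
  · simp only [h₁, h₂, if_true, if_false]
    rw [min_eq_right (by omega), max_eq_left (by omega)]
  · simp only [h₁, h₂, if_false]
    rw [min_eq_left (by omega), max_eq_right (by omega)]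

theorem exists_isRotated_of_mem_forwardChords_cyclicArc (hL : L.Nodup) {p q : ι × ι}
    (hp : p ∈ chords G L) (hq : q ∈ forwardChords G (cyclicArc L p.1 p.2)) :
    ∃ M B M' A, L ~r p.1 :: ((M ++ q.1 :: (B ++ q.2 :: M')) ++ p.2 :: A) := by
  obtain ⟨⟨h₁, h₂⟩, hadj⟩ := mem_chords.1 hp
  obtain ⟨hq, hlt⟩ := mem_forwardChords.1 hq
  obtain ⟨M, B, M', e⟩ := exists_eq_append_cons_append_cons hlt (mem_chords.1 hq).1.2
  exact ⟨M, B, M', _, e ▸ isRotated_cyclicArc hL hadj.ne h₁ h₂⟩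

theorem swap_mem_forwardChords_cyclicArc_swap (hL : L.Nodup) {p q : ι × ι}
    (hp : p ∈ chords G L) (hq : q ∈ forwardChords G (cyclicArc L p.1 p.2)) :
    q.swap ∈ chords G L ∧ p.swap ∈ forwardChords G (cyclicArc L q.swap.1 q.swap.2) := by
  obtain ⟨M, B, M', A, h⟩ := exists_isRotated_of_mem_forwardChords_cyclicArc hL hp hq
  have hadj := (mem_chords.1 (mem_forwardChords.1 hq).1).2
  have hswap := h.trans (isRotated_nested_swap M B M' A p.1 p.2 q.1 q.2)
  have harc : cyclicArc L q.2 q.1 = M' ++ p.2 :: (A ++ p.1 :: M) := cyclicArc_eq hL hswap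
  have hnodup : (M' ++ p.2 :: (A ++ p.1 :: M)).Nodup :=
    (List.nodup_append.1 (List.nodup_cons.1 (hswap.nodup_iff.1 hL)).2).1
  have hpos := idxOf_append_cons_append_cons hnodup
  refine ⟨mem_chords.2 ⟨⟨h.mem_iff.2 (by simp), h.mem_iff.2 (by simp)⟩, hadj.symm⟩, ?_⟩
  simp only [Prod.fst_swap, Prod.snd_swap, harc, mem_forwardChords, mem_chords,
    hpos.1, hpos.2.1]
  exact ⟨⟨by simp, (mem_chords.1 hp).2.symm⟩, by omega⟩

theorem sum_chords_cyclicArc {M : Type*} [AddCommMonoid M] (hL : L.Nodup)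
    (f : ι × ι → ι × ι → M) :
    ∑ p ∈ chords G L, ∑ q ∈ chords G (cyclicArc L p.1 p.2), f p q =
      ∑ p ∈ chords G L, ∑ q ∈ forwardChords G (cyclicArc L p.1 p.2), (f p q + f q.swap p) := by
  simp only [sum_chords (f _), Finset.sum_add_distrib]
  congr 1
  rw [Finset.sum_sigma', Finset.sum_sigma']
  refine Finset.sum_nbij' (fun c ↦ ⟨c.2.swap, c.1.swap⟩) (fun c ↦ ⟨c.2.swap, c.1.swap⟩)
    (fun c hc ↦ ?_) (fun c hc ↦ ?_) (fun _ _ ↦ rfl) (fun _ _ ↦ rfl) (fun _ _ ↦ rfl)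
  all_goals
    obtain ⟨hp, hq⟩ := Finset.mem_sigma.1 hc
    exact Finset.mem_sigma.2 (swap_mem_forwardChords_cyclicArc_swap hL hp hq)

end ChordPositions

section Necklaces

variable {k s t}

theorem isPathFrom_append {v : I} {l l' : List (Arr E)} :
    IsPathFrom s t v (l ++ l') ↔ IsPathFrom s t v l ∧ IsPathFrom s t (pathTgt s t v l) l' := by
  induction l generalizing v with
  | nil => simp [IsPathFrom, pathTgt]
  | cons a l ih => simp [IsPathFrom, pathTgt, ih, and_assoc]

theorem pathTgt_append {v : I} {l l' : List (Arr E)} :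
    pathTgt s t v (l ++ l') = pathTgt s t (pathTgt s t v l) l' := by
  induction l generalizing v with
  | nil => rfl
  | cons a l ih => simp [pathTgt, ih]

theorem asrc_astar (a : Arr E) : asrc s t (astar a) = atgt s t a := by
  cases a <;> rfl

theorem omg_swap (a b : Arr E) : omg k b a = -omg k a b := by
  rcases a with a | a <;> rcases b with b | b <;> simp only [omg, neg_zero]
  all_goals
    by_cases h : a = b
    · simp [h]
    · simp [h, Ne.symm h]

theorem chOrTerm_append_cons_append_cons (x : NCDRaw s t) {U A B : List (Arr E)} {a b : Arr E}
    (hx : x.1.1.path.arrows = U ++ a :: (A ++ b :: B)) :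
    chOrTerm k s t x (U.length, U.length + 1 + A.length) =
      -(omg k a b) •
        (mkNCD k s t (atgt s t a) A (insideCut x.1.2 U.length (U.length + 1 + A.length)) ⊗ₜ[k]
            mkNCD k s t (atgt s t b) (B ++ U)
              (outsideCutC x.1.2 x.1.1.path.arrows.length U.length (U.length + 1 + A.length)) -
          mkNCD k s t (atgt s t b) (B ++ U)
              (outsideCutC x.1.2 x.1.1.path.arrows.length U.length (U.length + 1 + A.length)) ⊗ₜ[k]
            mkNCD k s t (atgt s t a) A
              (insideCut x.1.2 U.length (U.length + 1 + A.length))) := by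
  have ha : x.1.1.path.arrows[U.length]? = some a := by simp [hx]
  have hb : x.1.1.path.arrows[U.length + 1 + A.length]? = some b := by
    rw [show x.1.1.path.arrows = (U ++ a :: A) ++ b :: B by simp [hx],
      List.getElem?_append_right (by simp; omega)]
    simp [Nat.add_right_comm, Nat.add_assoc]
  have hA : (x.1.1.path.arrows.drop (U.length + 1)).take
      (U.length + 1 + A.length - U.length - 1) = A := by
    rw [show x.1.1.path.arrows = (U ++ [a]) ++ (A ++ b :: B) by simp [hx],
      List.drop_left' (by simp)]
    simp [show U.length + 1 + A.length - U.length - 1 = A.length by omega]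
  have hB : x.1.1.path.arrows.drop (U.length + 1 + A.length + 1) ++
      x.1.1.path.arrows.take U.length = B ++ U := by
    congr 1
    · rw [show x.1.1.path.arrows = (U ++ a :: (A ++ [b])) ++ B by simp [hx]]
      exact List.drop_left' (by simp; omega)
    · simp [hx]
  simp only [chOrTerm, ha, hb, hA, hB]

theorem astar_astar (a : Arr E) : astar (astar a) = a := by
  cases a <;> rfl

theorem IsCut.getElem_eq_astar {l : List (Arr E)} {H : Finset (ℕ × ℕ)} (hH : IsCut l H)
    {i j : Fin l.length} (hij : ((i : ℕ), (j : ℕ)) ∈ H) : l[j] = astar l[i] := by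
  obtain ⟨-, -, e, ⟨hi, hj⟩ | ⟨hi, hj⟩⟩ := hH.1 _ hij <;>
  · simp only [Fin.is_lt, getElem?_pos, Option.some.injEq] at hi hj
    simp [hi, hj, astar]

variable (k) in
/-- The basis vector of the necklace chord diagram represented by `x`. -/
def NCDRaw.basisVector (x : NCDRaw s t) : ChOr k s t :=
  Finsupp.single (Quot.mk _ x) 1

theorem NCDRaw.basisVector_congr {x y : NCDRaw s t} (h : RotRelC s t x y) :
    x.basisVector k = y.basisVector k :=
  congrArg (Finsupp.single · 1) (Quot.sound h)

theorem NCDRaw.ext {x y : NCDRaw s t} (hsrc : x.1.1.path.src = y.1.1.path.src)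
    (harrows : x.1.1.path.arrows = y.1.1.path.arrows) (hcut : x.1.2 = y.1.2) : x = y := by
  obtain ⟨⟨⟨⟨v, l, hp⟩, hc⟩, H⟩, hx⟩ := x
  obtain ⟨⟨⟨⟨v', l', hp'⟩, hc'⟩, H'⟩, hx'⟩ := y
  obtain rfl : v = v' := hsrc
  obtain rfl : l = l' := harrows
  obtain rfl : H = H' := hcut
  rfl

theorem ChOr.hom_ext {M : Type*} [AddCommMonoid M] [Module k M] {f g : ChOr k s t →ₗ[k] M}
    (h : ∀ x : NCDRaw s t, f (x.basisVector k) = g (x.basisVector k)) : f = g :=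
  Finsupp.lhom_ext' fun q ↦ LinearMap.ext_ring <| by
    obtain ⟨x, rfl⟩ := Quot.exists_rep q
    exact h x

end Necklaces

section Labelled

open scoped List

variable {k s t} {ι : Type*}

/-- Labels for the arrow occurrences of a necklace, together with a graph whose edges are the
chords, so that occurrences keep their names under rotation and passage to subdiagrams. -/
structure ChordLabelling (ι E : Type*) where
  arrow : ι → Arr E
  graph : SimpleGraph ι
  arrow_eq_astar : ∀ i j, graph.Adj i j → arrow j = astar (arrow i)

namespace ChordLabelling

variable {D : ChordLabelling ι E} {v : I} {L L' A B : List ι} {i j : ι}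

variable (s t) in
/-- The labels `L` spell a closed path at `v` whose chords do not cross. -/
structure IsDiagram (D : ChordLabelling ι E) (v : I) (L : List ι) : Prop
    extends IsChordDiagram D.graph L where
  path : IsPathFrom s t v (L.map D.arrow)
  closed : pathTgt s t v (L.map D.arrow) = v

theorem IsDiagram.append_comm (h : D.IsDiagram s t v (A ++ B)) :
    D.IsDiagram s t (pathTgt s t v (A.map D.arrow)) (B ++ A) := by
  have hpath := h.path
  have hclosed := h.closed
  rw [List.map_append, isPathFrom_append] at hpath
  rw [List.map_append, pathTgt_append] at hclosed
  refine ⟨h.1.append_comm, ?_, ?_⟩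
  · rw [List.map_append, isPathFrom_append, hclosed]
    exact hpath.symm
  · rw [List.map_append, pathTgt_append, hclosed]

theorem IsDiagram.append_singleton (h : D.IsDiagram s t v (i :: L)) :
    D.IsDiagram s t (atgt s t (D.arrow i)) (L ++ [i]) :=
  append_comm (A := [i]) h

theorem IsDiagram.of_isRotated (h : D.IsDiagram s t v L) (hL : L ~r L') :
    ∃ w, D.IsDiagram s t w L' := by
  obtain ⟨n, hn, rfl⟩ := List.isRotated_iff_mod.1 hL
  rw [List.rotate_eq_drop_append_take hn]
  rw [← List.take_append_drop n L] at h
  exact ⟨_, h.append_comm⟩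

theorem IsDiagram.arc (h : D.IsDiagram s t v L) (hL : L ~r i :: (A ++ j :: B))
    (hij : D.graph.Adj i j) : D.IsDiagram s t (atgt s t (D.arrow i)) A := by
  obtain ⟨w, hw⟩ := h.of_isRotated hL
  have hpath := hw.path
  simp only [List.map_cons, List.map_append, IsPathFrom, isPathFrom_append] at hpath
  refine ⟨hw.1.sublist ((List.sublist_append_left _ _).trans (List.sublist_cons_self _ _)),
    hpath.2.1, ?_⟩
  rw [← hpath.2.2.1, D.arrow_eq_astar _ _ hij, asrc_astar]

variable [DecidableEq ι]

variable (k s t) in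
/-- The basis vector of the necklace chord diagram spelled by the labels `L`. -/
def diagram (D : ChordLabelling ι E) (v : I) (L : List ι) : ChOr k s t :=
  mkNCD k s t v (L.map D.arrow) (chordPairs D.graph L)

theorem getElem?_map_arrow_idxOf (hi : i ∈ L) :
    (L.map D.arrow)[L.idxOf i]? = some (D.arrow i) := by
  rw [List.getElem?_map, List.getElem?_idxOf hi, Option.map_some]

theorem isCut_chordPairs (h : IsChordDiagram D.graph L) :
    IsCut (L.map D.arrow) (chordPairs D.graph L) := by
  refine ⟨fun p hp ↦ ?_, fun p hp q hq hpq ↦ ?_, ?_⟩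
  · obtain ⟨c, hc, rfl⟩ := Finset.mem_image.1 hp
    obtain ⟨hc, hlt⟩ := mem_forwardChords.1 hc
    obtain ⟨⟨h₁, h₂⟩, hadj⟩ := mem_chords.1 hc
    refine ⟨hlt, by simpa using List.idxOf_lt_length_iff.2 h₂, ?_⟩
    rw [getElem?_map_arrow_idxOf h₁, getElem?_map_arrow_idxOf h₂, D.arrow_eq_astar _ _ hadj]
    rcases D.arrow c.1 with e | e
    · exact ⟨e, Or.inl ⟨rfl, rfl⟩⟩
    · exact ⟨e, Or.inr ⟨rfl, rfl⟩⟩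
  · obtain ⟨c, hc, rfl⟩ := Finset.mem_image.1 hp
    obtain ⟨d, hd, rfl⟩ := Finset.mem_image.1 hq
    obtain ⟨⟨h₁, h₂⟩, -⟩ := mem_chords.1 (mem_forwardChords.1 hc).1
    simpa only [ne_eq, List.idxOf_inj h₁, List.idxOf_inj h₂] using
      h.disjoint_of_mem_forwardChords hc hd fun e ↦ hpq (by rw [e])
  · rintro ⟨p, hp, q, hq, h₁, h₂, h₃⟩
    obtain ⟨c, hc, rfl⟩ := Finset.mem_image.1 hp
    obtain ⟨d, hd, rfl⟩ := Finset.mem_image.1 hq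
    obtain ⟨-, hc⟩ := mem_chords.1 (mem_forwardChords.1 hc).1
    obtain ⟨⟨-, hdL⟩, hd⟩ := mem_chords.1 (mem_forwardChords.1 hd).1
    exact h.noncrossing _ _ _ _ (sublist_of_idxOf_lt h₁ h₂ h₃ hdL) hc hd

/-- The closed path with cut spelled by the labels of a diagram. -/
def IsDiagram.toNCDRaw (h : D.IsDiagram s t v L) : NCDRaw s t :=
  ⟨(⟨⟨v, L.map D.arrow, h.path⟩, h.closed⟩, chordPairs D.graph L), isCut_chordPairs h.1⟩

theorem diagram_eq_basisVector (h : D.IsDiagram s t v L) :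
    D.diagram k s t v L = h.toNCDRaw.basisVector k :=
  dif_pos ⟨⟨h.path, h.closed⟩, isCut_chordPairs h.1⟩

theorem diagram_append_singleton (h : D.IsDiagram s t v (i :: L)) :
    D.diagram k s t v (i :: L) = D.diagram k s t (atgt s t (D.arrow i)) (L ++ [i]) := by
  rw [diagram_eq_basisVector h, diagram_eq_basisVector h.append_singleton]
  exact NCDRaw.basisVector_congr ⟨D.arrow i, L.map D.arrow, rfl, by simp [IsDiagram.toNCDRaw], rfl,
    by simpa [IsDiagram.toNCDRaw] using chordPairs_append_singleton h.nodup⟩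

theorem diagram_append_comm (h : D.IsDiagram s t v (A ++ B)) :
    D.diagram k s t v (A ++ B) = D.diagram k s t (pathTgt s t v (A.map D.arrow)) (B ++ A) := by
  induction A generalizing v B with
  | nil => simp [pathTgt]
  | cons i A ih =>
    have h' : D.IsDiagram s t (atgt s t (D.arrow i)) (A ++ (B ++ [i])) := by
      simpa using h.append_singleton
    rw [List.cons_append] at h ⊢
    rw [diagram_append_singleton h, List.append_assoc, ih h']
    simp [pathTgt]

variable (k s t) in
/-- The necklace chord diagram `X_{c,1}` cut off by the directed chord `c`; `X_{c,2}` is the one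
cut off by `c.swap`. -/
def arcDiagram (D : ChordLabelling ι E) (L : List ι) (c : ι × ι) : ChOr k s t :=
  D.diagram k s t (atgt s t (D.arrow c.1)) (cyclicArc L c.1 c.2)

variable (k s t) in
/-- The contribution of a directed chord to the cobracket: each chord `{i, j}` enters the cobracket
through the antisymmetric pair of its directed versions `(i, j)` and `(j, i)`. -/
def directedTerm (D : ChordLabelling ι E) (L : List ι) (c : ι × ι) :
    ChOr k s t ⊗[k] ChOr k s t :=
  -(omg k (D.arrow c.1) (D.arrow c.2)) • (D.arcDiagram k s t L c ⊗ₜ[k] D.arcDiagram k s t L c.swap)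

theorem arcDiagram_congr (hL : L.Nodup) (h : L ~r L') {c : ι × ι} (hc : c ∈ chords D.graph L) :
    D.arcDiagram k s t L c = D.arcDiagram k s t L' c := by
  obtain ⟨⟨h₁, h₂⟩, hadj⟩ := mem_chords.1 hc
  rw [arcDiagram, cyclicArc_congr hL h hadj.ne h₁ h₂, arcDiagram]

theorem sum_directedTerm_congr (hL : L.Nodup) (h : L ~r L') :
    ∑ c ∈ chords D.graph L, D.directedTerm k s t L c =
      ∑ c ∈ chords D.graph L', D.directedTerm k s t L' c := by
  refine Finset.sum_congr (chords_congr h) fun c hc ↦ ?_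
  rw [← chords_congr h] at hc
  rw [directedTerm, arcDiagram_congr hL h hc, arcDiagram_congr hL h (swap_mem_chords.2 hc),
    directedTerm]

theorem chOrTerm_toNCDRaw (h : D.IsDiagram s t v L) {c : ι × ι}
    (hc : c ∈ forwardChords D.graph L) :
    chOrTerm k s t h.toNCDRaw (L.idxOf c.1, L.idxOf c.2) =
      D.directedTerm k s t L c + D.directedTerm k s t L c.swap := by
  obtain ⟨i, j⟩ := c
  obtain ⟨hc, hlt⟩ := mem_forwardChords.1 hc
  obtain ⟨⟨-, hj⟩, hadj⟩ := mem_chords.1 hc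
  obtain ⟨u, A, B, rfl⟩ := exists_eq_append_cons_append_cons hlt hj
  have hrot := isRotated_append_cons_append_cons u A B i j
  have hpos := idxOf_append_cons_append_cons h.nodup
  have harrows : h.toNCDRaw.1.1.path.arrows =
      u.map D.arrow ++ D.arrow i :: (A.map D.arrow ++ D.arrow j :: B.map D.arrow) := by
    simp [IsDiagram.toNCDRaw]
  have hterm := chOrTerm_append_cons_append_cons (k := k) _ harrows
  simp only [List.length_map] at hterm
  rw [hpos.1, hpos.2.1, hterm]
  simp only [directedTerm, arcDiagram, Prod.swap, cyclicArc_eq h.nodup hrot,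
    cyclicArc_swap_eq h.nodup hrot, IsDiagram.toNCDRaw, List.length_map,
    insideCut_chordPairs h.nodup, outsideCutC_chordPairs h.1 hadj, ← List.map_append, diagram,
    omg_swap (D.arrow i)]
  module

theorem IsDiagram.exists_of_rotRelC (h : D.IsDiagram s t v L) {y : NCDRaw s t}
    (hy : RotRelC s t h.toNCDRaw y) :
    ∃ (w : I) (L' : List ι) (h' : D.IsDiagram s t w L'), L ~r L' ∧ y = h'.toNCDRaw := by
  obtain ⟨a, l, hx, hy, hsrc, hcut⟩ := hy
  obtain ⟨i, L, rfl, rfl, rfl⟩ := List.map_eq_cons_iff.1 hx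
  refine ⟨_, _, h.append_singleton, List.isRotated_append (l := [i]), NCDRaw.ext hsrc ?_ ?_⟩
  · simpa [toNCDRaw] using hy
  · simpa [toNCDRaw, chordPairs_append_singleton h.nodup] using hcut

theorem sum_chOrTerm_toNCDRaw (h : D.IsDiagram s t v L) :
    ∑ c ∈ h.toNCDRaw.1.2, chOrTerm k s t h.toNCDRaw c =
      ∑ c ∈ chords D.graph L, D.directedTerm k s t L c := by
  rw [sum_chords, show h.toNCDRaw.1.2 = chordPairs D.graph L from rfl, sum_chordPairs]
  exact Finset.sum_congr rfl fun c hc ↦ chOrTerm_toNCDRaw h hc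

end ChordLabelling

end Labelled

section Cobracket

open scoped List

variable {k s t}

/-- The positions of a closed path with cut, as labels. -/
def NCDRaw.labelling (x : NCDRaw s t) : ChordLabelling (Fin x.1.1.path.arrows.length) E where
  arrow i := x.1.1.path.arrows[i]
  graph := SimpleGraph.fromRel fun i j ↦ ((i : ℕ), (j : ℕ)) ∈ x.1.2
  arrow_eq_astar i j h := by
    obtain ⟨-, h | h⟩ := (SimpleGraph.fromRel_adj _ _ _).1 h
    · exact x.2.getElem_eq_astar h
    · rw [x.2.getElem_eq_astar h, astar_astar]

namespace NCDRaw

theorem labelling_adj_iff (x : NCDRaw s t) {i j : Fin x.1.1.path.arrows.length} (hij : i < j) :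
    x.labelling.graph.Adj i j ↔ ((i : ℕ), (j : ℕ)) ∈ x.1.2 := by
  have hji : ((j : ℕ), (i : ℕ)) ∉ x.1.2 := fun h ↦ hij.asymm (x.2.1 _ h).1
  simp [labelling, hij.ne, hji]

theorem isChordDiagram_labelling (x : NCDRaw s t) :
    IsChordDiagram x.labelling.graph (List.finRange x.1.1.path.arrows.length) := by
  refine ⟨List.nodup_finRange _, fun i j j' h h' ↦ ?_, fun a b c d hs hac hbd ↦ ?_⟩
  · obtain ⟨-, h⟩ := (SimpleGraph.fromRel_adj _ _ _).1 h
    obtain ⟨-, h'⟩ := (SimpleGraph.fromRel_adj _ _ _).1 h'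
    have hdisj := x.2.2.1
    have _ := x.2.1
    by_contra hne
    rcases h with h | h <;> rcases h' with h' | h'
    · exact (hdisj _ h _ h' (by grind)).1 rfl
    · exact (hdisj _ h _ h' (by grind)).2.1 rfl
    · exact (hdisj _ h _ h' (by grind)).2.2.1 rfl
    · exact (hdisj _ h _ h' (by grind)).2.2.2 rfl
  · have hlt := (List.pairwise_lt_finRange _).sublist hs
    obtain ⟨hab, hac', hbc, hbd', hcd⟩ : a < b ∧ a < c ∧ b < c ∧ b < d ∧ c < d := by grind
    exact x.2.2.2 ⟨_, (x.labelling_adj_iff hac').1 hac, _, (x.labelling_adj_iff hbd').1 hbd,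
      hab, hbc, hcd⟩

theorem chordPairs_labelling (x : NCDRaw s t) :
    chordPairs x.labelling.graph (List.finRange x.1.1.path.arrows.length) = x.1.2 := by
  ext p
  simp only [chordPairs, Finset.mem_image, mem_forwardChords, mem_chords,
    List.mem_finRange, List.idxOf_finRange]
  constructor
  · rintro ⟨c, hc, rfl⟩
    exact (x.labelling_adj_iff hc.2).1 hc.1.2
  · intro hp
    obtain ⟨h₁, h₂, -⟩ := x.2.1 _ hp
    exact ⟨(⟨p.1, h₁.trans h₂⟩, ⟨p.2, h₂⟩), ⟨⟨by simp, (x.labelling_adj_iff h₁).2 hp⟩, h₁⟩, rfl⟩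

theorem map_arrow_labelling (x : NCDRaw s t) :
    (List.finRange x.1.1.path.arrows.length).map x.labelling.arrow = x.1.1.path.arrows := by
  simp [labelling]

theorem exists_eq_toNCDRaw (x : NCDRaw s t) :
    ∃ (D : ChordLabelling (Fin x.1.1.path.arrows.length) E)
      (L : List (Fin x.1.1.path.arrows.length)) (h : D.IsDiagram s t x.1.1.path.src L),
      x = h.toNCDRaw :=
  ⟨x.labelling, _,
    ⟨x.isChordDiagram_labelling, by rw [map_arrow_labelling]; exact x.1.1.path.valid,
      by rw [map_arrow_labelling]; exact x.1.1.closed⟩,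
    NCDRaw.ext rfl x.map_arrow_labelling.symm x.chordPairs_labelling.symm⟩

theorem sum_chOrTerm_congr {x y : NCDRaw s t} (h : RotRelC s t x y) :
    ∑ c ∈ x.1.2, chOrTerm k s t x c = ∑ c ∈ y.1.2, chOrTerm k s t y c := by
  obtain ⟨D, L, hx, ex⟩ := x.exists_eq_toNCDRaw
  rw [ex] at h ⊢
  obtain ⟨w, L', hy, hL, rfl⟩ := hx.exists_of_rotRelC h
  rw [ChordLabelling.sum_chOrTerm_toNCDRaw, ChordLabelling.sum_chOrTerm_toNCDRaw,
    ChordLabelling.sum_directedTerm_congr hx.nodup hL]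

end NCDRaw

theorem deltaChOr_basisVector (x : NCDRaw s t) :
    deltaChOr k s t (x.basisVector k) = ∑ c ∈ x.1.2, chOrTerm k s t x c := by
  rw [deltaChOr, Finsupp.lift_apply, NCDRaw.basisVector]
  refine (Finsupp.sum_single_index ?_).trans ((one_smul _ _).trans ?_)
  · exact zero_smul _ _
  · exact congrArg (Quot.lift (fun x ↦ ∑ c ∈ x.1.2, chOrTerm k s t x c)
      fun _ _ ↦ NCDRaw.sum_chOrTerm_congr) (Quot.out_eq (Quot.mk _ x))

theorem ChordLabelling.deltaChOr_diagram {ι : Type*} [DecidableEq ι] {D : ChordLabelling ι E}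
    {v : I} {L : List ι} (h : D.IsDiagram s t v L) :
    deltaChOr k s t (D.diagram k s t v L) = ∑ c ∈ chords D.graph L, D.directedTerm k s t L c := by
  rw [diagram_eq_basisVector h, deltaChOr_basisVector, sum_chOrTerm_toNCDRaw]

theorem tau2_chOrTerm_add (x : NCDRaw s t) (c : ℕ × ℕ) :
    tau2 k (ChOr k s t) (chOrTerm k s t x c) + chOrTerm k s t x c = 0 := by
  unfold chOrTerm
  dsimp only
  split
  · simp only [tau2, map_smul, map_sub, LinearEquiv.coe_coe, TensorProduct.comm_tmul]
    module
  · rw [zero_smul, map_zero, add_zero]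

variable (k) in
/-- The sum of the cyclic permutations of a triple tensor. -/
def cyclicSum (g : Type*) [AddCommGroup g] [Module k g] :
    g ⊗[k] (g ⊗[k] g) →ₗ[k] g ⊗[k] (g ⊗[k] g) :=
  LinearMap.id + tau123 k g + tau132 k g

theorem isLieCobracket_iff {g : Type*} [AddCommGroup g] [Module k g] {δ : g →ₗ[k] g ⊗[k] g} :
    IsLieCobracket δ ↔ tau2 k g ∘ₗ δ + δ = 0 ∧ cyclicSum k g ∘ₗ leftIter δ = 0 :=
  and_congr_left' eq_neg_iff_add_eq_zero

theorem cyclicSum_tmul_rotate {g : Type*} [AddCommGroup g] [Module k g] (x y z : g) :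
    cyclicSum k g (x ⊗ₜ[k] (y ⊗ₜ[k] z)) = cyclicSum k g (y ⊗ₜ[k] (z ⊗ₜ[k] x)) := by
  simp only [cyclicSum, tau123, tau132, LinearMap.add_apply, LinearMap.id_apply,
    LinearMap.comp_apply, LinearEquiv.coe_coe, TensorProduct.comm_tmul, TensorProduct.assoc_tmul]
  abel

namespace ChordLabelling

variable {ι : Type*} [DecidableEq ι] {D : ChordLabelling ι E} {v : I} {L M M' A B C : List ι}
  {i j m n : ι}

variable (k s t) in
/-- The summand of `(δ ⊗ Id) ∘ δ` obtained by cutting along the directed chord `p` and then along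
the directed chord `q` inside `p`. -/
def iterTerm (D : ChordLabelling ι E) (L : List ι) (p q : ι × ι) :
    ChOr k s t ⊗[k] (ChOr k s t ⊗[k] ChOr k s t) :=
  (omg k (D.arrow p.1) (D.arrow p.2) * omg k (D.arrow q.1) (D.arrow q.2)) •
    (D.arcDiagram k s t (cyclicArc L p.1 p.2) q ⊗ₜ[k]
      (D.arcDiagram k s t (cyclicArc L p.1 p.2) q.swap ⊗ₜ[k] D.arcDiagram k s t L p.swap))

theorem leftIter_deltaChOr_diagram (h : D.IsDiagram s t v L) :
    leftIter (deltaChOr k s t) (D.diagram k s t v L) =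
      ∑ p ∈ chords D.graph L, ∑ q ∈ chords D.graph (cyclicArc L p.1 p.2),
        D.iterTerm k s t L p q := by
  simp only [leftIter, LinearMap.comp_apply, deltaChOr_diagram h, map_sum]
  refine Finset.sum_congr rfl fun p hp ↦ ?_
  obtain ⟨⟨h₁, h₂⟩, hadj⟩ := mem_chords.1 hp
  have harc := h.arc (isRotated_cyclicArc h.nodup hadj.ne h₁ h₂) hadj
  rw [directedTerm, map_smul, LinearMap.rTensor_tmul, arcDiagram, deltaChOr_diagram harc,
    TensorProduct.sum_tmul, map_smul, map_sum, Finset.smul_sum]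
  refine Finset.sum_congr rfl fun q _ ↦ ?_
  simp only [directedTerm, iterTerm, ← TensorProduct.smul_tmul', map_smul, smul_smul, neg_mul_neg,
    LinearEquiv.coe_coe, TensorProduct.assoc_tmul]

theorem iterTerm_eq (hL : L.Nodup) (h : L ~r i :: (C ++ j :: A)) (hC : C ~r m :: (B ++ n :: M)) :
    D.iterTerm k s t L (i, j) (m, n) =
      (omg k (D.arrow i) (D.arrow j) * omg k (D.arrow m) (D.arrow n)) •
        (D.diagram k s t (atgt s t (D.arrow m)) B ⊗ₜ[k]
          (D.diagram k s t (atgt s t (D.arrow n)) M ⊗ₜ[k]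
            D.diagram k s t (atgt s t (D.arrow j)) A)) := by
  have hCn : C.Nodup := (List.nodup_append.1 (List.nodup_cons.1 (h.nodup_iff.1 hL)).2).1
  simp only [iterTerm, arcDiagram, Prod.swap, cyclicArc_eq hL h, cyclicArc_swap_eq hL h,
    cyclicArc_eq hCn hC, cyclicArc_swap_eq hCn hC]

theorem diagram_outer_arc (h : D.IsDiagram s t v (M ++ m :: (B ++ n :: M')))
    (hmn : D.graph.Adj m n) :
    D.diagram k s t v (M ++ M') = D.diagram k s t (atgt s t (D.arrow n)) (M' ++ M) := by
  have hrot := (isRotated_append_cons_append_cons M B M' m n).trans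
    (isRotated_cons_append_cons m n B (M' ++ M))
  have hclosed := h.closed
  simp only [List.map_append, List.map_cons, pathTgt_append, pathTgt] at hclosed
  rw [diagram_append_comm (h.arc hrot hmn.symm), hclosed]

/-- The term of `q` nested in `p` is matched with the one of `p` nested in `q.swap`: both cut the
diagram into the same three pieces in the same cyclic order, with opposite signs. -/
theorem cyclicSum_iterTerm_add (h : D.IsDiagram s t v L) {p q : ι × ι}
    (hp : p ∈ chords D.graph L) (hq : q ∈ forwardChords D.graph (cyclicArc L p.1 p.2)) :
    cyclicSum k (ChOr k s t) (D.iterTerm k s t L p q + D.iterTerm k s t L q.swap p) = 0 := by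
  obtain ⟨i, j⟩ := p
  obtain ⟨m, n⟩ := q
  obtain ⟨M, B, M', A, hL⟩ := exists_isRotated_of_mem_forwardChords_cyclicArc h.nodup hp hq
  have hij := (mem_chords.1 hp).2
  have hmn := (mem_chords.1 (mem_forwardChords.1 hq).1).2
  have hC := isRotated_append_cons_append_cons M B M' m n
  have hC' := (isRotated_append_cons_append_cons M' A M j i).trans
    (isRotated_cons_append_cons j i A (M ++ M'))
  rw [iterTerm_eq h.nodup hL hC, Prod.swap,
    iterTerm_eq h.nodup (hL.trans (isRotated_nested_swap M B M' A i j m n)) hC',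
    diagram_outer_arc (h.arc hL hij) hmn, omg_swap (D.arrow m), map_add, map_smul, map_smul,
    cyclicSum_tmul_rotate (D.diagram k s t (atgt s t (D.arrow m)) B)]
  module

theorem cyclicSum_leftIter_diagram (h : D.IsDiagram s t v L) :
    cyclicSum k (ChOr k s t) (leftIter (deltaChOr k s t) (D.diagram k s t v L)) = 0 := by
  rw [leftIter_deltaChOr_diagram h, sum_chords_cyclicArc h.nodup]
  simp only [map_sum]
  exact Finset.sum_eq_zero fun p hp ↦ Finset.sum_eq_zero fun q hq ↦
    cyclicSum_iterTerm_add h hp hq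

end ChordLabelling

end Cobracket

/-- `(Ch_or, δ_or)` is a Lie coalgebra. -/
theorem deltaChOr_isLieCobracket : IsLieCobracket (deltaChOr k s t) := by
  refine isLieCobracket_iff.2 ⟨ChOr.hom_ext fun x ↦ ?_, ChOr.hom_ext fun x ↦ ?_⟩
  · simp only [LinearMap.comp_apply, LinearMap.add_apply, LinearMap.zero_apply,
      deltaChOr_basisVector, map_sum, ← Finset.sum_add_distrib, tau2_chOrTerm_add,
      Finset.sum_const_zero]
  · obtain ⟨D, L, h, e⟩ := x.exists_eq_toNCDRaw
    rw [e, ← ChordLabelling.diagram_eq_basisVector h]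
    exact ChordLabelling.cyclicSum_leftIter_diagram h

end
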